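/- Let N be a natural number, let a_1, ..., a_N be distinct positive real numbers, and let A_1, ..., A_N be positive real numbers. Then the vector v_A = (√A_1, ..., √A_N) is a cyclic vector for the weighted Cauchy matrix C_{a,A}; that is, the linear span of the vectors {C_{a,A}^n v_A : n ≥ 0} is all of ℂ^N. -/

import Mathlib

open Matrix MeasureTheory
open scoped ComplexOrder

/-- The weighted Cauchy matrix `C_{a,A} = (√(A_j A_k)/(a_j + a_k))_{j,k}`, as a complex matrix. -/
noncomputable def cauchyMatrix {N : ℕ} (a A : Fin N → ℝ) : Matrix (Fin N) (Fin N) ℂ :=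
  Matrix.of fun j k => ((Real.sqrt (A j * A k) / (a j + a k) : ℝ) : ℂ)

/-- The vector `v_A = (√A_1, ..., √A_N)` in `ℂ^N`. -/
noncomputable def vecA {N : ℕ} (A : Fin N → ℝ) : Fin N → ℂ :=
  fun k => ((Real.sqrt (A k) : ℝ) : ℂ)

/-!
With `D = diag(a)` the Cauchy matrix satisfies the Lyapunov equation `C D + D C = v vᴴ`. Such an
equation, with `C` Hermitian and `D` positive definite, transfers cyclicity of `v` from `D` to `C`.
A vector is cyclic for a Hermitian matrix unless some eigenvector is orthogonal to it, so suppose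
`C w = μ w` and `⟨v, w⟩ = 0`. Pairing the equation with `w` gives `2 μ ⟨w, D w⟩ = 0`, hence
`w = 0` or `μ = 0`. In the second case `w` lies in `ker C`, which by the same equation is orthogonal
to `v` and invariant under `D`; so `w` is orthogonal to every `Dⁿ v`, and `w = 0`. Finally, `v` is
cyclic for `D` because the `a_k` are distinct (Vandermonde) and no entry of `v` vanishes.
-/

section CyclicVector

variable {R M M' : Type*} [CommSemiring R] [AddCommMonoid M] [Module R M] [AddCommMonoid M']
  [Module R M']

/-- `v` is a cyclic vector for the endomorphism `T`: the orbit `{Tⁿ v : n ≥ 0}` spans the module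
(algebraically; no closure is taken). -/
def IsCyclicVector (T : Module.End R M) (v : M) : Prop :=
  Submodule.span R (Set.range fun n : ℕ => (T ^ n) v) = ⊤

lemma IsCyclicVector.map {T : Module.End R M} {T' : Module.End R M'} {v : M}
    (hv : IsCyclicVector T v) {f : M →ₗ[R] M'} (hf : Function.Surjective f)
    (hfT : T' ∘ₗ f = f ∘ₗ T) : IsCyclicVector T' (f v) := by
  have horbit : (fun n : ℕ => (T' ^ n) (f v)) = f ∘ fun n => (T ^ n) v :=
    funext fun n => LinearMap.congr_fun (Module.End.commute_pow_left_of_commute hfT n) v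
  rw [IsCyclicVector, horbit, Set.range_comp, Submodule.span_image, hv, Submodule.map_top,
    LinearMap.range_eq_top.2 hf]

lemma span_range_pow_apply_mem_invtSubmodule (T : Module.End R M) (v : M) :
    Submodule.span R (Set.range fun n : ℕ => (T ^ n) v) ∈ T.invtSubmodule := by
  rw [Module.End.mem_invtSubmodule, Submodule.span_le]
  rintro _ ⟨n, rfl⟩
  exact Submodule.subset_span ⟨n + 1, by simp only [pow_succ', Module.End.mul_apply]⟩

lemma isCyclicVector_toLin'_iff {n : Type*} [Fintype n] [DecidableEq n] {B : Matrix n n R}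
    {v : n → R} :
    IsCyclicVector (toLin' B) v ↔
      Submodule.span R (Set.range fun k : ℕ => (B ^ k) *ᵥ v) = ⊤ := by
  simp only [IsCyclicVector, ← toLin'_pow, toLin'_apply]

lemma isCyclicVector_toLin'_diagonal {K : Type*} [Field K] {N : ℕ} {d v : Fin N → K}
    (hd : Function.Injective d) (hv : ∀ i, v i ≠ 0) :
    IsCyclicVector (toLin' (diagonal d)) v := by
  let krylov : Matrix (Fin N) (Fin N) K := diagonal v * vandermonde d
  have hunit : IsUnit krylov := by
    rw [isUnit_iff_isUnit_det, isUnit_iff_ne_zero, det_mul, det_diagonal]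
    exact mul_ne_zero (Finset.prod_ne_zero_iff.2 fun i _ => hv i) (det_vandermonde_ne_zero_iff.2 hd)
  have hcol (k : Fin N) : krylov.col k = (diagonal d ^ (k : ℕ)) *ᵥ v := by
    ext i
    simp [krylov, diagonal_pow, mulVec_diagonal, vandermonde_apply, mul_comm]
  have hspan : Submodule.span K (Set.range krylov.col) = ⊤ := by
    rw [← range_mulVecLin, LinearMap.range_eq_top]
    exact mulVec_surjective_iff_isUnit.2 hunit
  rw [isCyclicVector_toLin'_iff, eq_top_iff, ← hspan]
  refine Submodule.span_mono ?_
  rintro _ ⟨k, rfl⟩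
  exact ⟨k, (hcol k).symm⟩

end CyclicVector

section InnerProductSpace

open scoped InnerProductSpace

variable {𝕜 E : Type*} [RCLike 𝕜] [NormedAddCommGroup E] [InnerProductSpace 𝕜 E]
  {S T : Module.End 𝕜 E} {v w : E}

lemma IsCyclicVector.eq_zero_of_forall_inner_eq_zero (hv : IsCyclicVector T v)
    (hw : ∀ n : ℕ, ⟪(T ^ n) v, w⟫_𝕜 = 0) : w = 0 := by
  have hle : Submodule.span 𝕜 (Set.range fun n : ℕ => (T ^ n) v) ≤ (𝕜 ∙ w)ᗮ := by
    rw [Submodule.span_le]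
    rintro _ ⟨n, rfl⟩
    exact Submodule.mem_orthogonal_singleton_iff_inner_left.2 (hw n)
  rw [hv, top_le_iff, Submodule.orthogonal_eq_top_iff, Submodule.span_singleton_eq_bot] at hle
  exact hle

lemma isCyclicVector_of_forall_eigenvector_inner_ne_zero [FiniteDimensional 𝕜 E]
    (hT : T.IsSymmetric) (h : ∀ μ w, Module.End.HasEigenvector T μ w → ⟪v, w⟫_𝕜 ≠ 0) :
    IsCyclicVector T v := by
  let U := Submodule.span 𝕜 (Set.range fun n : ℕ => (T ^ n) v)
  have hinv : Uᗮ ∈ T.invtSubmodule :=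
    hT.orthogonalComplement_mem_invtSubmodule (span_range_pow_apply_mem_invtSubmodule T v)
  have hvU : v ∈ U := Submodule.subset_span ⟨0, rfl⟩
  have heigenspace (μ : 𝕜) : Module.End.eigenspace (T.restrict hinv) μ = ⊥ := by
    by_contra hμ
    obtain ⟨w, hw⟩ := Module.End.HasEigenvalue.exists_hasEigenvector hμ
    refine h μ w ⟨Module.End.mem_eigenspace_iff.2 (congrArg Subtype.val hw.apply_eq_smul), ?_⟩
      (w.2 v hvU)
    exact fun h0 => hw.2 (Subtype.ext h0)
  have := (hT.restrict_invariant hinv).subsingleton_of_no_eigenvalue_finiteDimensional heigenspace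
  exact Submodule.orthogonal_eq_bot_iff.1 Submodule.eq_bot_of_subsingleton

section Lyapunov

variable (hT : T.IsSymmetric) (hTS : ∀ x : E, T (S x) + S (T x) = ⟪v, x⟫_𝕜 • v)
include hT hTS

lemma inner_eq_zero_of_mem_ker_of_lyapunov (hw : w ∈ LinearMap.ker T) : ⟪v, w⟫_𝕜 = 0 := by
  rw [LinearMap.mem_ker] at hw
  have hTSw : T (S w) = ⟪v, w⟫_𝕜 • v := by simpa [hw] using hTS w
  have hmul : ⟪v, w⟫_𝕜 * ⟪w, v⟫_𝕜 = 0 := by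
    rw [← inner_smul_right, ← hTSw, ← hT, hw, inner_zero_left]
  exact (mul_eq_zero.1 hmul).elim id inner_eq_zero_symm.1

lemma ker_mem_invtSubmodule_of_lyapunov : LinearMap.ker T ∈ S.invtSubmodule := by
  intro w hw
  have hvw := inner_eq_zero_of_mem_ker_of_lyapunov hT hTS hw
  rw [LinearMap.mem_ker] at hw
  simpa [hw, hvw] using hTS w

lemma ker_eq_bot_of_lyapunov (hS : S.IsSymmetric) (hv : IsCyclicVector S v) :
    LinearMap.ker T = ⊥ := by
  refine (Submodule.eq_bot_iff _).2 fun w hw => hv.eq_zero_of_forall_inner_eq_zero fun n => ?_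
  have hSw : (S ^ n) w ∈ LinearMap.ker T := by
    rw [Module.End.pow_apply]
    exact Set.MapsTo.iterate (ker_mem_invtSubmodule_of_lyapunov hT hTS) n hw
  rw [hS.pow n]
  exact inner_eq_zero_of_mem_ker_of_lyapunov hT hTS hSw

lemma eigenvalue_eq_zero_of_lyapunov (hS_def : ∀ x, ⟪x, S x⟫_𝕜 = 0 → x = 0) {μ : 𝕜}
    (hw : Module.End.HasEigenvector T μ w) (hvw : ⟪v, w⟫_𝕜 = 0) : μ = 0 := by
  have hconj : starRingEnd 𝕜 μ = μ :=
    hT.conj_eigenvalue_eq_self (Module.End.hasEigenvalue_of_hasEigenvector hw)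
  have hpair : 2 * μ * ⟪w, S w⟫_𝕜 = 0 :=
    calc 2 * μ * ⟪w, S w⟫_𝕜 = ⟪T w, S w⟫_𝕜 + ⟪w, S (T w)⟫_𝕜 := by
          rw [hw.apply_eq_smul, map_smul, inner_smul_left, inner_smul_right, hconj]
          ring
      _ = ⟪w, T (S w) + S (T w)⟫_𝕜 := by rw [hT, inner_add_right]
      _ = 0 := by rw [hTS, hvw, zero_smul, inner_zero_right]
  simpa [mt (hS_def w) hw.2] using hpair

theorem IsCyclicVector.of_lyapunov [FiniteDimensional 𝕜 E] (hS : S.IsSymmetric)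
    (hS_def : ∀ x, ⟪x, S x⟫_𝕜 = 0 → x = 0) (hv : IsCyclicVector S v) : IsCyclicVector T v := by
  refine isCyclicVector_of_forall_eigenvector_inner_ne_zero hT fun μ w hw hvw => hw.2 ?_
  obtain rfl := eigenvalue_eq_zero_of_lyapunov hT hTS hS_def hw hvw
  have hker : w ∈ LinearMap.ker T := by simpa using hw.apply_eq_smul
  rwa [ker_eq_bot_of_lyapunov hT hTS hS hv] at hker

end Lyapunov

end InnerProductSpace

theorem isCyclicVector_toLin'_of_lyapunov {𝕜 n : Type*} [RCLike 𝕜] [Fintype n] [DecidableEq n]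
    {C D : Matrix n n 𝕜} {v : n → 𝕜} (hC : C.IsHermitian) (hD : D.PosDef)
    (hCD : C * D + D * C = vecMulVec v (star v)) (hv : IsCyclicVector (toLin' D) v) :
    IsCyclicVector (toLin' C) v := by
  let e := WithLp.linearEquiv 2 𝕜 (n → 𝕜)
  have hTS (x : EuclideanSpace 𝕜 n) : toEuclideanLin C (toEuclideanLin D x) +
      toEuclideanLin D (toEuclideanLin C x) = inner 𝕜 (e.symm v) x • e.symm v := by
    apply e.injective
    simpa [e, add_mulVec, vecMulVec_mulVec, EuclideanSpace.inner_eq_star_dotProduct,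
      dotProduct_comm] using congrArg (· *ᵥ e x) hCD
  have hD_def (x : EuclideanSpace 𝕜 n) (hx : inner 𝕜 x (toEuclideanLin D x) = 0) : x = 0 := by
    contrapose! hx
    have := (hD.dotProduct_mulVec_pos (e.map_ne_zero_iff.2 hx)).ne'
    simpa [e, EuclideanSpace.inner_eq_star_dotProduct, dotProduct_comm] using this
  have hvD : IsCyclicVector (toEuclideanLin D) (e.symm v) :=
    hv.map (f := e.symm.toLinearMap) e.symm.surjective rfl
  have hvC : IsCyclicVector (toEuclideanLin C) (e.symm v) :=
    hvD.of_lyapunov (isSymmetric_toEuclideanLin_iff.2 hC) hTS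
      (isSymmetric_toEuclideanLin_iff.2 hD.isHermitian) hD_def
  exact hvC.map (f := e.toLinearMap) e.surjective rfl

section CauchyMatrix

variable {N : ℕ} {a A : Fin N → ℝ}

lemma cauchyMatrix_isHermitian : (cauchyMatrix a A).IsHermitian := by
  ext j k
  simp [cauchyMatrix, mul_comm (A j), add_comm (a j : ℂ)]

lemma cauchyMatrix_lyapunov (ha : ∀ j k, a j + a k ≠ 0) (hA : ∀ k, 0 ≤ A k) :
    cauchyMatrix a A * diagonal (fun k => (a k : ℂ)) +
      diagonal (fun k => (a k : ℂ)) * cauchyMatrix a A = vecMulVec (vecA A) (star (vecA A)) := by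
  ext j k
  have h : (a j : ℂ) + a k ≠ 0 := mod_cast ha j k
  simp only [cauchyMatrix, vecA, Real.sqrt_mul (hA j), Matrix.add_apply, mul_diagonal,
    diagonal_mul, of_apply, vecMulVec_apply, Pi.star_apply, RCLike.star_def, Complex.conj_ofReal]
  push_cast
  field_simp
  ring

end CauchyMatrix

/-- The vector `v_A` is cyclic for the weighted Cauchy matrix: the span of
`{C_{a,A}^n v_A : n ≥ 0}` is all of `ℂ^N`. -/
theorem cauchyMatrix_cyclic_vecA (N : ℕ) (a A : Fin N → ℝ)
    (ha : Function.Injective a) (ha0 : ∀ k, 0 < a k) (hA : ∀ k, 0 < A k) :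
    Submodule.span ℂ (Set.range fun n : ℕ => (cauchyMatrix a A ^ n) *ᵥ vecA A) = ⊤ := by
  have hlyapunov := cauchyMatrix_lyapunov (fun j k => (add_pos (ha0 j) (ha0 k)).ne')
    fun k => (hA k).le
  have hposDef : (diagonal fun k => (a k : ℂ)).PosDef :=
    PosDef.diagonal fun k => Complex.zero_lt_real.2 (ha0 k)
  have hcyclic : IsCyclicVector (toLin' (diagonal fun k => (a k : ℂ))) (vecA A) :=
    isCyclicVector_toLin'_diagonal (Complex.ofReal_injective.comp ha) fun k =>
      Complex.ofReal_ne_zero.2 (Real.sqrt_pos.2 (hA k)).ne'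
  exact isCyclicVector_toLin'_iff.1
    (isCyclicVector_toLin'_of_lyapunov cauchyMatrix_isHermitian hposDef hlyapunov hcyclic)
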